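/- Define f(r) := ∫_0^r f'(s) ds, where f'(s) := (1/2)∫_s^∞ u·exp(−(1/2)∫_s^u x·θ(x) dx) du. Then for every r ≥ 0 one has the two-sided linear bounds (1/κ)·r ≤ f(r) ≤ f'(0)·r, where f'(0) = exp(L·R₁²/4)·κ^{-1} + (exp(L·R₁²/4) − 1)·L^{-1}. -/

import Mathlib

/-- The piecewise function `θ(x) = -L` for `x < R₁` and `θ(x) = κ` for `x ≥ R₁`. -/
noncomputable def theta (κ L R₁ : ℝ) : ℝ → ℝ := fun x => if x < R₁ then -L else κ

/-- `f'(s) = (1/2)∫_s^∞ u · exp(-(1/2)∫_s^u x·θ(x) dx) du`. -/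
noncomputable def fPrime (κ L R₁ : ℝ) (s : ℝ) : ℝ :=
  (1 / 2) * ∫ u in Set.Ioi s, u * Real.exp (-(1 / 2) * ∫ x in s..u, x * theta κ L R₁ x)

/-- `f(r) = ∫_0^r f'(s) ds`. -/
noncomputable def fAux (κ L R₁ : ℝ) (r : ℝ) : ℝ := ∫ s in (0 : ℝ)..r, fPrime κ L R₁ s

/-!
On `[R₁, ∞)` the exponent is that of a pure Gaussian, so `f'` is constantly `κ⁻¹` there, while
splitting the defining integral at `R₁` makes `f' s`, for `s ≤ R₁`, an explicit function of
`(R₁² - s²) / 4`. That function is increasing as soon as `θ` is, that is when `-L ≤ κ`, and its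
values at `0` and `R₁² / 4` are the two slopes.
-/

open MeasureTheory Set Filter Topology

section GaussianMoment

variable {a : ℝ}

lemma hasDerivAt_exp_mul_sq_sub_sq_div (ha : a ≠ 0) (s u : ℝ) :
    HasDerivAt (fun u => Real.exp (a * (u ^ 2 - s ^ 2)) / (2 * a))
      (u * Real.exp (a * (u ^ 2 - s ^ 2))) u := by
  refine (((((hasDerivAt_pow 2 u).sub_const (s ^ 2)).const_mul a).exp).div_const
    (2 * a)).congr_deriv ?_
  simp only [Nat.cast_ofNat, Nat.add_one_sub_one, pow_one]
  field_simp

lemma integral_mul_exp_mul_sq_sub_sq (ha : a ≠ 0) (s t : ℝ) :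
    ∫ u in s..t, u * Real.exp (a * (u ^ 2 - s ^ 2)) =
      (Real.exp (a * (t ^ 2 - s ^ 2)) - 1) / (2 * a) := by
  rw [intervalIntegral.integral_eq_sub_of_hasDerivAt
    (fun u _ => hasDerivAt_exp_mul_sq_sub_sq_div ha s u)
    (Continuous.intervalIntegrable (by fun_prop) _ _), sub_self, mul_zero, Real.exp_zero, sub_div]

lemma integrable_mul_exp_mul_sq_sub_sq (ha : a < 0) (s : ℝ) :
    Integrable fun u : ℝ => u * Real.exp (a * (u ^ 2 - s ^ 2)) := by
  refine ((integrable_mul_exp_neg_mul_sq (neg_pos.2 ha)).mul_const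
    (Real.exp (-(a * s ^ 2)))).congr (ae_of_all _ fun u => ?_)
  simp only [neg_neg, mul_assoc, ← Real.exp_add]
  ring_nf

lemma tendsto_exp_mul_sq_sub_sq_atTop (ha : a < 0) (s : ℝ) :
    Tendsto (fun u : ℝ => Real.exp (a * (u ^ 2 - s ^ 2))) atTop (𝓝 0) :=
  Real.tendsto_exp_atBot.comp <|
    (tendsto_atTop_add_const_right _ _ (tendsto_pow_atTop two_ne_zero)).const_mul_atTop_of_neg ha

lemma integral_Ioi_mul_exp_mul_sq_sub_sq (ha : a < 0) (s : ℝ) :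
    ∫ u in Ioi s, u * Real.exp (a * (u ^ 2 - s ^ 2)) = -(2 * a)⁻¹ := by
  rw [integral_Ioi_of_hasDerivAt_of_tendsto'
    (fun u _ => hasDerivAt_exp_mul_sq_sub_sq_div ha.ne s u)
    (integrable_mul_exp_mul_sq_sub_sq ha s).integrableOn
    ((tendsto_exp_mul_sq_sub_sq_atTop ha s).div_const (2 * a))]
  simp

end GaussianMoment

section IntegralTheta

variable {κ L R₁ s u : ℝ}

lemma integral_mul_theta_of_ge (hs : R₁ ≤ s) (hu : R₁ ≤ u) :
    ∫ x in s..u, x * theta κ L R₁ x = κ * (u ^ 2 - s ^ 2) / 2 := by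
  have theta_eq : EqOn (fun x => x * theta κ L R₁ x) (fun x => x * κ) (uIoo s u) := fun x hx => by
    simp only [theta, if_neg ((le_inf hs hu).trans hx.1.le).not_gt]
  rw [intervalIntegral.integral_congr_uIoo theta_eq, intervalIntegral.integral_mul_const,
    integral_id]
  ring

lemma integral_mul_theta_of_le (hs : s ≤ R₁) (hu : u ≤ R₁) :
    ∫ x in s..u, x * theta κ L R₁ x = -L * (u ^ 2 - s ^ 2) / 2 := by
  have theta_eq : EqOn (fun x => x * theta κ L R₁ x) (fun x => x * -L) (uIoo s u) := fun x hx => by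
    simp only [theta, if_pos (hx.2.trans_le (sup_le hs hu))]
  rw [intervalIntegral.integral_congr_uIoo theta_eq, intervalIntegral.integral_mul_const,
    integral_id]
  ring

lemma intervalIntegrable_mul_theta (κ L R₁ a b : ℝ) :
    IntervalIntegrable (fun x => x * theta κ L R₁ x) volume a b := by
  classical
  have eq_piecewise : (fun x => x * theta κ L R₁ x) =
      (Iio R₁).piecewise (fun x => x * -L) (fun x => x * κ) := by
    ext x
    simp only [theta, piecewise, mem_Iio, mul_ite]
  have linear_integrable (c : ℝ) : IntegrableOn (fun x : ℝ => x * c) (uIoc a b) :=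
    intervalIntegrable_iff.1 (Continuous.intervalIntegrable (by fun_prop) a b)
  rw [eq_piecewise, intervalIntegrable_iff]
  exact Integrable.piecewise measurableSet_Iio (linear_integrable (-L)).integrableOn
    (linear_integrable κ).integrableOn

end IntegralTheta

/-- The integrand `u · exp(-(1/2)∫_s^u x·θ(x) dx)` in the definition of `f'(s)`. -/
noncomputable def fPrimeIntegrand (κ L R₁ s u : ℝ) : ℝ :=
  u * Real.exp (-(1 / 2) * ∫ x in s..u, x * theta κ L R₁ x)

section Integrand

variable {κ L R₁ s u : ℝ}

lemma fPrimeIntegrand_of_ge (hs : R₁ ≤ s) (hu : R₁ ≤ u) :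
    fPrimeIntegrand κ L R₁ s u = u * Real.exp (-κ / 4 * (u ^ 2 - s ^ 2)) := by
  rw [fPrimeIntegrand, integral_mul_theta_of_ge hs hu]
  ring_nf

lemma fPrimeIntegrand_of_le (hs : s ≤ R₁) (hu : u ≤ R₁) :
    fPrimeIntegrand κ L R₁ s u = u * Real.exp (L / 4 * (u ^ 2 - s ^ 2)) := by
  rw [fPrimeIntegrand, integral_mul_theta_of_le hs hu]
  ring_nf

lemma fPrimeIntegrand_eq_exp_mul (hs : s ≤ R₁) (u : ℝ) :
    fPrimeIntegrand κ L R₁ s u =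
      Real.exp (L * ((R₁ ^ 2 - s ^ 2) / 4)) * fPrimeIntegrand κ L R₁ R₁ u := by
  rw [fPrimeIntegrand, fPrimeIntegrand, ← intervalIntegral.integral_add_adjacent_intervals
    (intervalIntegrable_mul_theta κ L R₁ s R₁) (intervalIntegrable_mul_theta κ L R₁ R₁ u),
    integral_mul_theta_of_le hs le_rfl, mul_add, Real.exp_add]
  ring_nf

lemma integrableOn_Ioi_fPrimeIntegrand_of_ge (hκ : 0 < κ) (L : ℝ) (hs : R₁ ≤ s) :
    IntegrableOn (fPrimeIntegrand κ L R₁ s) (Ioi s) :=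
  (integrable_mul_exp_mul_sq_sub_sq (a := -κ / 4) (by linarith) s).integrableOn.congr_fun
    (fun _ hu => (fPrimeIntegrand_of_ge hs (hs.trans (le_of_lt hu))).symm) measurableSet_Ioi

lemma integral_Ioi_fPrimeIntegrand_of_ge (hκ : 0 < κ) (L : ℝ) (hs : R₁ ≤ s) :
    ∫ u in Ioi s, fPrimeIntegrand κ L R₁ s u = 2 * κ⁻¹ := by
  rw [setIntegral_congr_fun measurableSet_Ioi fun _ hu =>
      fPrimeIntegrand_of_ge hs (hs.trans (le_of_lt hu)),
    integral_Ioi_mul_exp_mul_sq_sub_sq (by linarith)]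
  field_simp
  norm_num

lemma eqOn_fPrimeIntegrand_uIoo (hs : s ≤ R₁) :
    EqOn (fPrimeIntegrand κ L R₁ s) (fun u => u * Real.exp (L / 4 * (u ^ 2 - s ^ 2)))
      (uIoo s R₁) :=
  fun _ hu => fPrimeIntegrand_of_le hs (hu.2.le.trans (sup_le hs le_rfl))

lemma intervalIntegrable_fPrimeIntegrand_of_le (hs : s ≤ R₁) :
    IntervalIntegrable (fPrimeIntegrand κ L R₁ s) volume s R₁ :=
  (Continuous.intervalIntegrable (by fun_prop) s R₁).congr_uIoo (eqOn_fPrimeIntegrand_uIoo hs).symm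

lemma integral_fPrimeIntegrand_of_le (hL : L ≠ 0) (hs : s ≤ R₁) :
    ∫ u in s..R₁, fPrimeIntegrand κ L R₁ s u =
      2 * ((Real.exp (L * ((R₁ ^ 2 - s ^ 2) / 4)) - 1) * L⁻¹) := by
  rw [intervalIntegral.integral_congr_uIoo (eqOn_fPrimeIntegrand_uIoo hs),
    integral_mul_exp_mul_sq_sub_sq (div_ne_zero hL four_ne_zero), div_mul_eq_mul_div, mul_div_assoc]
  field_simp
  ring

end Integrand

/-- The closed form of `f'` on `(-∞, R₁]`, in the variable `t = (R₁² - s²) / 4`. -/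
noncomputable def fPrimeProfile (κ L t : ℝ) : ℝ :=
  Real.exp (L * t) * κ⁻¹ + (Real.exp (L * t) - 1) * L⁻¹

section Profile

variable {κ L : ℝ}

lemma fPrimeProfile_zero (κ L : ℝ) : fPrimeProfile κ L 0 = κ⁻¹ := by
  simp [fPrimeProfile]

lemma hasDerivAt_fPrimeProfile (κ : ℝ) (hL : L ≠ 0) (t : ℝ) :
    HasDerivAt (fPrimeProfile κ L) (Real.exp (L * t) * (L * κ⁻¹ + 1)) t := by
  have hexp : HasDerivAt (fun t => Real.exp (L * t)) (Real.exp (L * t) * L) t := by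
    simpa using ((hasDerivAt_id t).const_mul L).exp
  refine ((hexp.mul_const κ⁻¹).add ((hexp.sub_const 1).mul_const L⁻¹)).congr_deriv ?_
  field_simp

lemma monotone_fPrimeProfile (hκ : 0 < κ) (hL : L ≠ 0) (hκL : -L ≤ κ) :
    Monotone (fPrimeProfile κ L) := by
  have slope_nonneg : 0 ≤ L * κ⁻¹ + 1 := by
    have := mul_le_mul_of_nonneg_right hκL (inv_nonneg.2 hκ.le)
    rw [mul_inv_cancel₀ hκ.ne'] at this
    linarith
  refine monotone_of_deriv_nonneg
    (fun t => (hasDerivAt_fPrimeProfile κ hL t).differentiableAt) fun t => ?_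
  rw [(hasDerivAt_fPrimeProfile κ hL t).deriv]
  positivity

end Profile

section FPrime

variable {κ L R₁ s : ℝ}

lemma fPrime_of_ge (hκ : 0 < κ) (L : ℝ) (hs : R₁ ≤ s) : fPrime κ L R₁ s = κ⁻¹ :=
  calc fPrime κ L R₁ s = 1 / 2 * ∫ u in Ioi s, fPrimeIntegrand κ L R₁ s u := rfl
    _ = κ⁻¹ := by rw [integral_Ioi_fPrimeIntegrand_of_ge hκ L hs]; ring

lemma fPrime_of_le (hκ : 0 < κ) (hL : L ≠ 0) (hs : s ≤ R₁) :
    fPrime κ L R₁ s = fPrimeProfile κ L ((R₁ ^ 2 - s ^ 2) / 4) := by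
  set E := Real.exp (L * ((R₁ ^ 2 - s ^ 2) / 4)) with E_def
  have tail_eq : fPrimeIntegrand κ L R₁ s = fun u => E * fPrimeIntegrand κ L R₁ R₁ u :=
    funext (fPrimeIntegrand_eq_exp_mul hs)
  have tail_integrable : IntegrableOn (fPrimeIntegrand κ L R₁ s) (Ioi R₁) :=
    tail_eq ▸ (integrableOn_Ioi_fPrimeIntegrand_of_ge hκ L le_rfl).const_mul E
  have tail_integral : ∫ u in Ioi R₁, fPrimeIntegrand κ L R₁ s u = E * (2 * κ⁻¹) := by
    rw [tail_eq, integral_const_mul, integral_Ioi_fPrimeIntegrand_of_ge hκ L le_rfl]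
  calc fPrime κ L R₁ s = 1 / 2 * ∫ u in Ioi s, fPrimeIntegrand κ L R₁ s u := rfl
    _ = 1 / 2 * ((∫ u in s..R₁, fPrimeIntegrand κ L R₁ s u) +
          ∫ u in Ioi R₁, fPrimeIntegrand κ L R₁ s u) := by
      rw [intervalIntegral.integral_interval_add_Ioi' (intervalIntegrable_fPrimeIntegrand_of_le hs)
        tail_integrable]
    _ = E * κ⁻¹ + (E - 1) * L⁻¹ := by
      rw [integral_fPrimeIntegrand_of_le hL hs, tail_integral, ← E_def]
      ring

lemma fPrime_eq_fPrimeProfile (hκ : 0 < κ) (hL : L ≠ 0) (R₁ s : ℝ) :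
    fPrime κ L R₁ s = fPrimeProfile κ L ((R₁ ^ 2 - min s R₁ ^ 2) / 4) := by
  rcases le_total s R₁ with hs | hs
  · rw [min_eq_left hs, fPrime_of_le hκ hL hs]
  · rw [min_eq_right hs, fPrime_of_ge hκ L hs, sub_self, zero_div, fPrimeProfile_zero]

lemma continuous_fPrime (hκ : 0 < κ) (hL : L ≠ 0) (R₁ : ℝ) : Continuous (fPrime κ L R₁) := by
  simp only [funext (fPrime_eq_fPrimeProfile hκ hL R₁), fPrimeProfile]
  fun_prop

lemma inv_le_fPrime (hκ : 0 < κ) (hL : L ≠ 0) (hκL : -L ≤ κ) (R₁ : ℝ) (hs : 0 ≤ s) :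
    κ⁻¹ ≤ fPrime κ L R₁ s := by
  have min_sq_le : min s R₁ ^ 2 ≤ R₁ ^ 2 := by
    rcases le_total s R₁ with h | h
    · rw [min_eq_left h]; gcongr
    · rw [min_eq_right h]
  rw [fPrime_eq_fPrimeProfile hκ hL, ← fPrimeProfile_zero κ L]
  exact monotone_fPrimeProfile hκ hL hκL (by linarith)

lemma fPrime_le_fPrimeProfile (hκ : 0 < κ) (hL : L ≠ 0) (hκL : -L ≤ κ) (R₁ s : ℝ) :
    fPrime κ L R₁ s ≤ fPrimeProfile κ L (R₁ ^ 2 / 4) := by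
  rw [fPrime_eq_fPrimeProfile hκ hL]
  exact monotone_fPrimeProfile hκ hL hκL (by linarith [sq_nonneg (min s R₁)])

end FPrime

theorem fAux_linear_bounds_general {κ L r : ℝ} (hκ : 0 < κ) (hL : L ≠ 0) (hκL : -L ≤ κ)
    (R₁ : ℝ) (hr : 0 ≤ r) :
    (1 / κ) * r ≤ fAux κ L R₁ r ∧
    fAux κ L R₁ r ≤
      (Real.exp (L * R₁ ^ 2 / 4) * κ⁻¹ + (Real.exp (L * R₁ ^ 2 / 4) - 1) * L⁻¹) * r := by
  have integrable : IntervalIntegrable (fPrime κ L R₁) volume 0 r :=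
    (continuous_fPrime hκ hL R₁).intervalIntegrable 0 r
  constructor
  · calc (1 / κ) * r = ∫ _ in (0 : ℝ)..r, κ⁻¹ := by simp [mul_comm]
      _ ≤ fAux κ L R₁ r := intervalIntegral.integral_mono_on hr intervalIntegrable_const
        integrable fun s hs => inv_le_fPrime hκ hL hκL R₁ hs.1
  · calc fAux κ L R₁ r ≤ ∫ _ in (0 : ℝ)..r, fPrimeProfile κ L (R₁ ^ 2 / 4) :=
        intervalIntegral.integral_mono_on hr integrable intervalIntegrable_const
          fun s _ => fPrime_le_fPrimeProfile hκ hL hκL R₁ s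
      _ = _ := by
        rw [intervalIntegral.integral_const, sub_zero, smul_eq_mul, mul_comm, fPrimeProfile,
          mul_div_assoc]

/-- for every `r ≥ 0`, `(1/κ)·r ≤ f(r) ≤ f'(0)·r`, where
`f'(0) = exp(L·R₁²/4)·κ⁻¹ + (exp(L·R₁²/4) − 1)·L⁻¹`. -/
theorem fAux_linear_bounds (κ L R₁ : ℝ) (hκ : 0 < κ) (hL : 0 < L) (hR₁ : 0 ≤ R₁)
    (r : ℝ) (hr : 0 ≤ r) :
    (1 / κ) * r ≤ fAux κ L R₁ r ∧
    fAux κ L R₁ r ≤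
      (Real.exp (L * R₁ ^ 2 / 4) * κ⁻¹ + (Real.exp (L * R₁ ^ 2 / 4) - 1) * L⁻¹) * r :=
  fAux_linear_bounds_general hκ hL.ne' (by linarith) R₁ hr
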